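/- Let X be a partial allocation, let g be an unallocated good, and suppose agent i champions agent j; let G_{ij} be a maximum-cardinality subset G of X_j ∪ {g} with v_i((X_j ∪ {g}) ∖ G) > v_i(X_i). If agent k is not a most envious agent for X_j ∪ {g}, then v_k((X_j ∪ {g}) ∖ G_{ij}) ≤ v_k(X_k). -/

import Mathlib

open Finset

/-- Additive value of a bundle `S` under per-good valuation `v`. -/
noncomputable def val {G : Type*} (v : G → ℝ) (S : Finset G) : ℝ := ∑ g ∈ S, v g

/-- `X` is EFX: no agent `i` strongly envies agent `j`, i.e. for every good `g`
in `X j`, `v_i(X_i) ≥ v_i(X_j \ {g})`. -/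
def EFX {G : Type*} [DecidableEq G] (v : Fin 3 → G → ℝ) (X : Fin 3 → Finset G) : Prop :=
  ∀ i j : Fin 3, ∀ g ∈ X j, val (v i) (X j \ {g}) ≤ val (v i) (X i)

/-- `κ_X(i,S)`: the minimum cardinality of a subset `S' ⊆ S` with `v_i(S') > v_i(X_i)`. -/
noncomputable def kappa {G : Type*} (v : G → ℝ) (Xi S : Finset G) : ℕ :=
  sInf {n : ℕ | ∃ S' ⊆ S, S'.card = n ∧ val v Xi < val v S'}

/-- Agent `i` is a most envious agent for the bundle `S` under allocation `X`. -/
def MostEnvious {G : Type*} (v : Fin 3 → G → ℝ) (X : Fin 3 → Finset G)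
    (i : Fin 3) (S : Finset G) : Prop :=
  val (v i) (X i) < val (v i) S ∧
    ∀ k : Fin 3, val (v k) (X k) < val (v k) S →
      kappa (v i) (X i) S ≤ kappa (v k) (X k) S

/-!
Maximality of the removed set `R` says that `S \ R` is a smallest subset of `S` that agent `i`
prefers to his own bundle, so `|S \ R| = κ(i, S)`. An agent `k` preferring `S \ R` to his own
bundle would satisfy `κ(k, S) ≤ |S \ R| = κ(i, S)` and so would be a most envious agent himself.
-/

section

variable {G : Type*}

theorem val_le_val_of_subset {v : G → ℝ} {S T : Finset G} (hST : S ⊆ T)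
    (hv : ∀ a ∈ T, a ∉ S → 0 ≤ v a) : val v S ≤ val v T :=
  sum_le_sum_of_subset_of_nonneg hST hv

theorem kappa_le_card {v : G → ℝ} {A S T : Finset G} (hTS : T ⊆ S) (hT : val v A < val v T) :
    kappa v A S ≤ T.card :=
  Nat.sInf_le ⟨T, hTS, rfl, hT⟩

theorem exists_subset_card_eq_kappa {v : G → ℝ} {A S T : Finset G} (hTS : T ⊆ S)
    (hT : val v A < val v T) : ∃ U ⊆ S, U.card = kappa v A S ∧ val v A < val v U := by
  have hne : {n : ℕ | ∃ U ⊆ S, U.card = n ∧ val v A < val v U}.Nonempty :=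
    ⟨T.card, T, hTS, rfl, hT⟩
  exact Nat.sInf_mem hne

theorem card_sdiff_eq_kappa [DecidableEq G] {v : G → ℝ} {A S R : Finset G} (hRS : R ⊆ S)
    (hR : val v A < val v (S \ R))
    (hmax : ∀ R' ⊆ S, val v A < val v (S \ R') → R'.card ≤ R.card) :
    (S \ R).card = kappa v A S := by
  refine le_antisymm ?_ (kappa_le_card sdiff_subset hR)
  obtain ⟨T, hTS, hT_card, hT⟩ := exists_subset_card_eq_kappa sdiff_subset hR
  have hle : (S \ T).card ≤ R.card :=
    hmax (S \ T) sdiff_subset (by rwa [Finset.sdiff_sdiff_eq_self hTS])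
  have hT_add := card_sdiff_add_card_eq_card hTS
  have hR_add := card_sdiff_add_card_eq_card hRS
  omega

theorem MostEnvious.of_kappa_le {v : Fin 3 → G → ℝ} {X : Fin 3 → Finset G} {i k : Fin 3}
    {S : Finset G} (hi : MostEnvious v X i S) (hk : val (v k) (X k) < val (v k) S)
    (hle : kappa (v k) (X k) S ≤ kappa (v i) (X i) S) : MostEnvious v X k S :=
  ⟨hk, fun l hl => hle.trans (hi.2 l hl)⟩

theorem non_champion_does_not_envy_champion_bundle_general [DecidableEq G] {v : Fin 3 → G → ℝ}
    {X : Fin 3 → Finset G} {i k : Fin 3} {S R : Finset G} (hv : ∀ a ∈ S, 0 ≤ v k a)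
    (hi : MostEnvious v X i S) (hRS : R ⊆ S) (hR : val (v i) (X i) < val (v i) (S \ R))
    (hmax : ∀ R' ⊆ S, val (v i) (X i) < val (v i) (S \ R') → R'.card ≤ R.card)
    (hk : ¬ MostEnvious v X k S) :
    val (v k) (S \ R) ≤ val (v k) (X k) := by
  by_contra! hlt
  have hk_envies : val (v k) (X k) < val (v k) S :=
    hlt.trans_le (val_le_val_of_subset sdiff_subset fun a ha _ => hv a ha)
  have hkappa : kappa (v k) (X k) S ≤ kappa (v i) (X i) S :=
    (kappa_le_card sdiff_subset hlt).trans_eq (card_sdiff_eq_kappa hRS hR hmax)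
  exact hk (hi.of_kappa_le hk_envies hkappa)

end

/-- Observation 4 (part 2): if `i` champions `j` with `G_ij` a maximum-cardinality removable
set, then any agent `k` that is not a most envious agent for `X_j ∪ {g}` does not prefer
`(X_j ∪ {g}) \ G_ij` to his own bundle. -/
theorem non_champion_does_not_envy_champion_bundle {G : Type*} [DecidableEq G] (M : Finset G)
    (v : Fin 3 → G → ℝ) (hv : ∀ i : Fin 3, ∀ g ∈ M, 0 ≤ v i g)
    (X : Fin 3 → Finset G) (hXM : ∀ i, X i ⊆ M)
    (hdisj : ∀ i j, i ≠ j → Disjoint (X i) (X j))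
    (g : G) (hg : g ∈ M) (hun : g ∉ X 0 ∪ X 1 ∪ X 2)
    (i j : Fin 3) (hch : MostEnvious v X i (X j ∪ {g}))
    (Gij : Finset G) (hGsub : Gij ⊆ X j ∪ {g})
    (hGval : val (v i) (X i) < val (v i) ((X j ∪ {g}) \ Gij))
    (hGmax : ∀ G' ⊆ X j ∪ {g},
      val (v i) (X i) < val (v i) ((X j ∪ {g}) \ G') → G'.card ≤ Gij.card)
    (k : Fin 3) (hk : ¬ MostEnvious v X k (X j ∪ {g})) :
    val (v k) ((X j ∪ {g}) \ Gij) ≤ val (v k) (X k) := by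
  have hSM : X j ∪ {g} ⊆ M := union_subset (hXM j) (singleton_subset_iff.2 hg)
  exact non_champion_does_not_envy_champion_bundle_general (fun a ha => hv k a (hSM ha))
    hch hGsub hGval hGmax hk
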